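/- arXiv:1810.02307 — 6 statements merged into one kernel-verified Lean document; each statement's English description precedes it below -/
import Mathlib

section
/- For every n ≥ 1 and symmetric matrix Q ∈ ℝ^{n×n}, let γ₀ = min over all pairs (i,j) with 1 ≤ i ≤ j ≤ n of Q_{ij}, and suppose Q_{kk} > γ₀ for every k = 1,…,n. Then ν(Q) ≥ γ₀ + 1 / (Σ_{k=1}^n 1/(Q_{kk} − γ₀)). -/
open Matrix

/-- The unit simplex `Δ_n` is `stdSimplex ℝ (Fin n)`.
`nu n Q` is the minimum of `xᵀQx` over the unit simplex (the infimum, which is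
attained since the simplex is compact and the quadratic form is continuous). -/
noncomputable def nu (n : ℕ) (Q : Matrix (Fin n) (Fin n) ℝ) : ℝ :=
  sInf ((fun x : Fin n → ℝ => x ⬝ᵥ Q.mulVec x) '' stdSimplex ℝ (Fin n))

/-- With γ₀ the minimum entry of Q (over pairs i ≤ j), if every diagonal entry
strictly exceeds γ₀, then ν(Q) ≥ γ₀ + 1 / (Σ_k 1/(Q_kk − γ₀)). -/
theorem nu_lower_bound_l1 (n : ℕ) (hn : 1 ≤ n) (Q : Matrix (Fin n) (Fin n) ℝ)
    (hQ : Q.IsSymm) (γ₀ : ℝ)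
    (hγ₀ : IsLeast {v : ℝ | ∃ i j : Fin n, i ≤ j ∧ Q i j = v} γ₀)
    (hdiag : ∀ k, γ₀ < Q k k) :
    γ₀ + 1 / ∑ k, 1 / (Q k k - γ₀) ≤ nu n Q := by
  have hall : ∀ i j, γ₀ ≤ Q i j := by
    intro i j
    rcases le_total i j with h | h
    · exact hγ₀.2 ⟨i, j, h, rfl⟩
    · rw [← hQ.apply i j]
      exact hγ₀.2 ⟨j, i, h, rfl⟩
  have hne : Nonempty (Fin n) := ⟨⟨0, hn⟩⟩
  have hpos : ∀ k, 0 < Q k k - γ₀ := fun k => sub_pos.2 (hdiag k)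
  have hS : 0 < ∑ k, 1 / (Q k k - γ₀) :=
    Finset.sum_pos (fun k _ => one_div_pos.2 (hpos k)) Finset.univ_nonempty
  unfold nu
  apply le_csInf
  · exact Set.Nonempty.image _ ⟨_, single_mem_stdSimplex ℝ (⟨0, hn⟩ : Fin n)⟩
  rintro _ ⟨x, ⟨hx0, hx1⟩, rfl⟩
  have hcs : (∑ k, x k) ^ 2 ≤ (∑ k, (Q k k - γ₀) * x k ^ 2) * ∑ k, 1 / (Q k k - γ₀) := by
    apply Finset.sum_sq_le_sum_mul_sum_of_sq_eq_mul
    · intro k _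
      exact mul_nonneg (hpos k).le (sq_nonneg _)
    · intro k _
      exact (one_div_pos.2 (hpos k)).le
    · intro k _
      have := (hpos k).ne'
      field_simp
  rw [hx1, one_pow, ← div_le_iff₀ hS] at hcs
  have hrow : ∀ i, γ₀ * x i + (Q i i - γ₀) * x i ^ 2 ≤ x i * ∑ j, Q i j * x j := by
    intro i
    have h1 : (Q i i - γ₀) * x i ≤ ∑ j, (Q i j - γ₀) * x j :=
      Finset.single_le_sum (f := fun j => (Q i j - γ₀) * x j)
        (fun j _ => mul_nonneg (sub_nonneg.2 (hall i j)) (hx0 j)) (Finset.mem_univ i)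
    have h2 : ∑ j, (Q i j - γ₀) * x j = ∑ j, Q i j * x j - γ₀ := by
      simp only [sub_mul, Finset.sum_sub_distrib, ← Finset.mul_sum, hx1, mul_one]
    rw [h2] at h1
    nlinarith [mul_le_mul_of_nonneg_left h1 (hx0 i)]
  have hsum := Finset.sum_le_sum (fun i (_ : i ∈ Finset.univ) => hrow i)
  rw [Finset.sum_add_distrib, ← Finset.mul_sum, hx1, mul_one] at hsum
  change _ ≤ ∑ i, x i * ∑ j, Q i j * x j
  linarith
end

section
/- For every n ≥ 1 and symmetric matrix Q ∈ ℝ^{n×n}: (a) for every x ∈ Δ_n, max_{j ∈ P(x)} (Qx)_j ≥ ν(Q), where P(x) = {j : x_j > 0}; and (b) there exists x* ∈ Δ_n with max_{j ∈ P(x*)} (Qx*)_j = ν(Q). In other words, ν(Q) = min_{x ∈ Δ_n} max_{j ∈ P(x)} (Qx)_j, and this minimum is attained. -/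
open Matrix

theorem aux_perturb (a c : ℝ) (h : ∀ t : ℝ, 0 < t → t ≤ 1 → 0 ≤ 2 * t * a + t ^ 2 * c) : 0 ≤ a := by
  by_contra hc
  have ha : a < 0 := lt_of_not_ge hc
  have hd : 0 < |c| + 1 - a := by linarith [abs_nonneg c]
  have ht : 0 < (-a) / (|c| + 1 - a) := div_pos (by linarith) hd
  have ht1 : (-a) / (|c| + 1 - a) ≤ 1 := by
    rw [div_le_one hd]; linarith [abs_nonneg c]
  have htd : (-a) / (|c| + 1 - a) * (|c| + 1 - a) = -a := div_mul_cancel₀ _ hd.ne'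
  generalize (-a) / (|c| + 1 - a) = t at *
  have h1 := h t ht ht1
  have h2 : 0 ≤ 2 * a + t * c := by
    by_contra h3
    have := mul_neg_of_pos_of_neg ht (lt_of_not_ge h3)
    nlinarith
  have h4 : t * c ≤ t * |c| := mul_le_mul_of_nonneg_left (le_abs_self c) ht.le
  have h5 : 0 < t * (1 - a) := mul_pos ht (by linarith)
  nlinarith

/-- ν(Q) = min over x ∈ Δ_n of max over the support of x of (Qx)_j, and the
minimum is attained. -/
theorem nu_minimax_characterization (n : ℕ) (hn : 1 ≤ n)
    (Q : Matrix (Fin n) (Fin n) ℝ) (hQ : Q.IsSymm) :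
    (∀ x ∈ stdSimplex ℝ (Fin n),
        nu n Q ≤ sSup {v : ℝ | ∃ j, 0 < x j ∧ Q.mulVec x j = v}) ∧
    (∃ x ∈ stdSimplex ℝ (Fin n),
        sSup {v : ℝ | ∃ j, 0 < x j ∧ Q.mulVec x j = v} = nu n Q) := by
  have hcont : Continuous (fun x : Fin n → ℝ => x ⬝ᵥ Q.mulVec x) := by
    unfold Matrix.mulVec dotProduct
    fun_prop
  have hcomp : IsCompact (stdSimplex ℝ (Fin n)) := isCompact_stdSimplex ℝ (Fin n)
  have hbdd := (hcomp.image hcont).bddBelow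
  have hnu : ∀ x ∈ stdSimplex ℝ (Fin n), nu n Q ≤ x ⬝ᵥ Q.mulVec x :=
    fun x hx => csInf_le hbdd ⟨x, hx, rfl⟩
  have hne : (stdSimplex ℝ (Fin n)).Nonempty := ⟨_, single_mem_stdSimplex ℝ (⟨0, hn⟩ : Fin n)⟩
  constructor
  · intro x hx
    refine (hnu x hx).trans ?_
    have hb : BddAbove {v : ℝ | ∃ j, 0 < x j ∧ Q.mulVec x j = v} :=
      ((Set.finite_range (Q.mulVec x)).subset (by rintro v ⟨j, _, rfl⟩; exact ⟨j, rfl⟩)).bddAbove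
    generalize hS : sSup {v : ℝ | ∃ j, 0 < x j ∧ Q.mulVec x j = v} = S
    have h1 : ∑ j, x j * S = S := by rw [← Finset.sum_mul, hx.2, one_mul]
    rw [← h1]
    refine Finset.sum_le_sum fun j _ => ?_
    rcases (hx.1 j).eq_or_lt with h | h
    · simp [← h]
    · exact mul_le_mul_of_nonneg_left (hS ▸ le_csSup hb ⟨j, h, rfl⟩) h.le
  · obtain ⟨x, hx, hxm⟩ := (hcomp.image hcont).sInf_mem (hne.image _)
    change x ⬝ᵥ Q.mulVec x = nu n Q at hxm
    refine ⟨x, hx, ?_⟩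
    have hge : ∀ j, nu n Q ≤ Q.mulVec x j := by
      intro j
      set e : Fin n → ℝ := Pi.single j 1 with he
      have hem : e ∈ stdSimplex ℝ (Fin n) := single_mem_stdSimplex ℝ j
      have hsym : x ⬝ᵥ Q.mulVec e = e ⬝ᵥ Q.mulVec x := by
        rw [dotProduct_mulVec, ← mulVec_transpose, hQ.eq, dotProduct_comm]
      have hej : e ⬝ᵥ Q.mulVec x = Q.mulVec x j := by simp [he]
      have := aux_perturb (Q.mulVec x j - nu n Q)
        (e ⬝ᵥ Q.mulVec e - 2 * Q.mulVec x j + nu n Q) (by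
          intro t ht ht1
          have hy := hnu ((1 - t) • x + t • e)
            ((convex_stdSimplex ℝ (Fin n)) hx hem (by linarith) ht.le (by ring))
          simp only [mulVec_add, mulVec_smul, dotProduct_add, add_dotProduct, smul_dotProduct,
            dotProduct_smul, smul_eq_mul, hsym, hej, hxm] at hy
          linarith)
      linarith
    have hz : ∑ j, x j * (Q.mulVec x j - nu n Q) = 0 := by
      simp only [mul_sub, Finset.sum_sub_distrib, ← Finset.sum_mul, hx.2, one_mul]
      exact sub_eq_zero.2 hxm
    have hz' := (Finset.sum_eq_zero_iff_of_nonneg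
      (fun j _ => mul_nonneg (hx.1 j) (sub_nonneg.2 (hge j)))).1 hz
    have heq : ∀ j, 0 < x j → Q.mulVec x j = nu n Q := by
      intro j hj
      rcases mul_eq_zero.1 (hz' j (Finset.mem_univ j)) with h | h
      · exact absurd h hj.ne'
      · exact sub_eq_zero.1 h
    have hex : ∃ j, 0 < x j := by
      by_contra hcon
      have h0 : ∑ j, x j ≤ 0 := Finset.sum_nonpos fun j _ => not_lt.1 fun h => hcon ⟨j, h⟩
      linarith [hx.2]
    obtain ⟨j, hj⟩ := hex
    have hset : {v : ℝ | ∃ j, 0 < x j ∧ Q.mulVec x j = v} = {nu n Q} := by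
      ext v
      constructor
      · rintro ⟨k, hk, rfl⟩
        exact heq k hk
      · rintro rfl
        exact ⟨j, hj, heq j hj⟩
    rw [hset, csSup_singleton]
end

section
/- For every n ≥ 1, symmetric matrix Q ∈ ℝ^{n×n}, x ∈ Δ_n, index j ∈ {1,…,n}, and real number ℓ with ℓ ≤ ν(Q), one has (Qx)_j − xᵀQx ≤ max_{i = 1,…,n} Q_{ij} − ℓ. Consequently the big-M values M_j = max_{i} Q_{ij} − ℓ are valid upper bounds on the quantities z_j = max(0, (Qx)_j − α) whenever α ≥ xᵀQx. -/
open Matrix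

/-- If ℓ ≤ ν(Q), then for any x ∈ Δ_n and index j,
(Qx)_j − xᵀQx ≤ max_i Q i j − ℓ; consequently max(0, (Qx)_j − α) ≤ max_i Q i j − ℓ
whenever α ≥ xᵀQx. -/
theorem bigM_bound_valid (n : ℕ) (hn : 1 ≤ n)
    (Q : Matrix (Fin n) (Fin n) ℝ) (hQ : Q.IsSymm)
    (x : Fin n → ℝ) (hx : x ∈ stdSimplex ℝ (Fin n)) (j : Fin n)
    (ℓ : ℝ) (hℓ : ℓ ≤ nu n Q) :
    Q.mulVec x j - x ⬝ᵥ Q.mulVec x ≤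
      Finset.univ.sup' (Finset.univ_nonempty_iff.mpr ⟨⟨0, hn⟩⟩) (fun i => Q i j) - ℓ ∧
    ∀ α : ℝ, x ⬝ᵥ Q.mulVec x ≤ α →
      max 0 (Q.mulVec x j - α) ≤
        Finset.univ.sup' (Finset.univ_nonempty_iff.mpr ⟨⟨0, hn⟩⟩) (fun i => Q i j) - ℓ := by
  have key : ∀ y ∈ stdSimplex ℝ (Fin n), ℓ ≤ y ⬝ᵥ Q.mulVec y := by
    intro y hy
    refine hℓ.trans (csInf_le ?_ ⟨y, hy, rfl⟩)
    refine ((isCompact_stdSimplex ℝ (Fin n)).image ?_).bddBelow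
    simp only [dotProduct, Matrix.mulVec]
    fun_prop
  set M := Finset.univ.sup' (Finset.univ_nonempty_iff.mpr ⟨⟨0, hn⟩⟩) (fun i => Q i j) with hM
  have hle : ∀ i, Q i j ≤ M := fun i =>
    Finset.le_sup' (fun i => Q i j) (Finset.mem_univ i)
  have h1 : Q.mulVec x j ≤ M := by
    calc Q.mulVec x j = ∑ i, Q i j * x i := by
          simp only [Matrix.mulVec, dotProduct]
          exact Finset.sum_congr rfl fun i _ => by rw [hQ.apply]
      _ ≤ ∑ i, M * x i :=
          Finset.sum_le_sum fun i _ => mul_le_mul_of_nonneg_right (hle i) (hx.1 i)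
      _ = M := by rw [← Finset.mul_sum, hx.2, mul_one]
  have h2 := key x hx
  have h3 : ℓ ≤ Q j j := by
    have := key _ (single_mem_stdSimplex ℝ j)
    simpa using this
  refine ⟨by linarith, fun α hα => max_le ?_ ?_⟩
  · linarith [hle j]
  · linarith
end

section
/- For every n ≥ 1 and symmetric matrix Q ∈ ℝ^{n×n}, suppose x ∈ Δ_n is a KKT point with multiplier λ ∈ ℝ and slack s ∈ ℝ^n (i.e., s ≥ 0, Qx = λe + s, x_j·s_j = 0 for all j) and ℓ ∈ ℝ satisfies ℓ ≤ ν(Q). Then for every j ∈ {1,…,n}, s_j ≤ max_{i = 1,…,n} Q_{ij} − ℓ; that is, M_j = max_i Q_{ij} − ℓ is a valid big-M bound in the KKT-based mixed integer linear programming formulation. -/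
open Matrix

/-- At a KKT point with slack s, and for any lower bound ℓ ≤ ν(Q), the slack
satisfies s_j ≤ max_i Q i j − ℓ for every j. -/
theorem slack_bigM_bound (n : ℕ) (hn : 1 ≤ n)
    (Q : Matrix (Fin n) (Fin n) ℝ) (hQ : Q.IsSymm)
    (x : Fin n → ℝ) (hx : x ∈ stdSimplex ℝ (Fin n))
    (lam : ℝ) (s : Fin n → ℝ) (hs : ∀ j, 0 ≤ s j)
    (heq : ∀ j, Q.mulVec x j = lam + s j)
    (hcomp : ∀ j, x j * s j = 0)
    (ℓ : ℝ) (hℓ : ℓ ≤ nu n Q) :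
    ∀ j, s j ≤ Finset.univ.sup' (Finset.univ_nonempty_iff.mpr ⟨⟨0, hn⟩⟩) (fun i => Q i j) - ℓ := by
  intro j
  have hlam : x ⬝ᵥ Q.mulVec x = lam := by
    have h1 : ∀ i, x i * Q.mulVec x i = x i * lam := by
      intro i
      rw [heq, mul_add, hcomp, add_zero]
    simp only [dotProduct, h1]
    rw [← Finset.sum_mul, hx.2, one_mul]
  have hnu : nu n Q ≤ lam := by
    have hb : BddBelow
        ((fun x : Fin n → ℝ => x ⬝ᵥ Q.mulVec x) '' stdSimplex ℝ (Fin n)) := by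
      apply IsCompact.bddBelow
      apply (isCompact_stdSimplex ℝ (Fin n)).image
      simp only [dotProduct, Matrix.mulVec]
      fun_prop
    exact csInf_le hb ⟨x, hx, hlam⟩
  have hle : Q.mulVec x j ≤
      Finset.univ.sup' (Finset.univ_nonempty_iff.mpr ⟨⟨0, hn⟩⟩) (fun i => Q i j) := by
    set M := Finset.univ.sup' (Finset.univ_nonempty_iff.mpr ⟨⟨0, hn⟩⟩) (fun i => Q i j) with hM
    calc Q.mulVec x j = ∑ i, Q j i * x i := rfl
      _ ≤ ∑ i, M * x i := by
        apply Finset.sum_le_sum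
        intro i _
        apply mul_le_mul_of_nonneg_right _ (hx.1 i)
        rw [← hQ.apply j i]
        exact Finset.le_sup' (fun i => Q i j) (Finset.mem_univ i)
      _ = M := by rw [← Finset.mul_sum, hx.2, mul_one]
  have := heq j
  linarith
end

section
/- For every n ≥ 1 and symmetric matrix Q ∈ ℝ^{n×n}, there exists a global minimizer x* ∈ Δ_n of xᵀQx over Δ_n (i.e., (x*)ᵀQx* = ν(Q)) such that the support of x* forms a clique in the convexity graph of Q; that is, for every pair of distinct indices i, j in P(x*) = {k : x*_k > 0}, one has Q_{ii} + Q_{jj} − 2Q_{ij} > 0. -/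
open Matrix

lemma clique_step {n : ℕ} (Q : Matrix (Fin n) (Fin n) ℝ) (hQ : Q.IsSymm)
    (x : Fin n → ℝ) (hx : x ∈ stdSimplex ℝ (Fin n)) (i j : Fin n) (hij : i ≠ j)
    (hi : 0 < x i) (hj : 0 < x j) (hc : Q i i + Q j j - 2 * Q i j ≤ 0)
    (hb : Q.mulVec x i ≤ Q.mulVec x j) :
    ∃ y ∈ stdSimplex ℝ (Fin n), y ⬝ᵥ Q.mulVec y ≤ x ⬝ᵥ Q.mulVec x ∧
      (Finset.univ.filter (fun k => 0 < y k)).card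
        < (Finset.univ.filter (fun k => 0 < x k)).card := by
  classical
  set d : Fin n → ℝ := Pi.single i 1 - Pi.single j 1 with hd
  have hdi : d i = 1 := by simp [hd, hij]
  have hdj : d j = -1 := by simp [hd, hij.symm]
  have hdk : ∀ k, k ≠ i → k ≠ j → d k = 0 := by
    intro k h1 h2
    simp [hd, h1, h2]
  have hyj : (x + x j • d) j = 0 := by simp [hdj]
  have hyi : (x + x j • d) i = x i + x j := by simp [hdi]
  have hyk : ∀ k, k ≠ i → k ≠ j → (x + x j • d) k = x k := by
    intro k h1 h2
    simp [hdk k h1 h2]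
  refine ⟨x + x j • d, ⟨?_, ?_⟩, ?_, ?_⟩
  · intro k
    by_cases h2 : k = j
    · rw [h2, hyj]
    by_cases h1 : k = i
    · rw [h1, hyi]; positivity
    rw [hyk k h1 h2]; exact hx.1 k
  · have h := hx.2
    simp [Finset.sum_add_distrib, ← Finset.mul_sum, hd, h]
  · have hs : x ⬝ᵥ Q.mulVec d = d ⬝ᵥ Q.mulVec x := by
      rw [Matrix.dotProduct_mulVec, ← Matrix.mulVec_transpose, hQ.eq, dotProduct_comm]
    have hdx : d ⬝ᵥ Q.mulVec x = Q.mulVec x i - Q.mulVec x j := by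
      simp [hd, sub_dotProduct]
    have hji : Q j i = Q i j := hQ.apply i j
    have hdd : d ⬝ᵥ Q.mulVec d = Q i i + Q j j - 2 * Q i j := by
      simp [hd, sub_dotProduct, Matrix.mulVec_sub, hji]
      ring
    have hexp : (x + x j • d) ⬝ᵥ Q.mulVec (x + x j • d) = x ⬝ᵥ Q.mulVec x
        + x j * (2 * (d ⬝ᵥ Q.mulVec x)) + x j * x j * (d ⬝ᵥ Q.mulVec d) := by
      simp only [Matrix.mulVec_add, Matrix.mulVec_smul, add_dotProduct, dotProduct_add,
        smul_dotProduct, dotProduct_smul, smul_eq_mul, hs]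
      ring
    rw [hexp, hdd, hdx]
    have h1 := mul_nonneg hj.le (sub_nonneg.2 hb)
    have h2 := mul_nonneg (mul_nonneg hj.le hj.le) (neg_nonneg.2 hc)
    nlinarith
  · apply Finset.card_lt_card
    rw [Finset.ssubset_iff_of_subset]
    · exact ⟨j, by simpa using hj, by simp [hdj]⟩
    · intro k hk
      rw [Finset.mem_filter] at hk ⊢
      refine ⟨Finset.mem_univ _, ?_⟩
      by_cases h2 : k = j
      · rw [h2]; exact hj
      by_cases h1 : k = i
      · rw [h1]; exact hi
      have := hk.2
      rwa [hyk k h1 h2] at this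

/-- There exists a global minimizer of (StQP) whose support forms a clique in
the convexity graph of Q: Q_ii + Q_jj − 2 Q_ij > 0 for all distinct i, j in the
support. -/
theorem exists_minimizer_support_clique (n : ℕ) (hn : 1 ≤ n)
    (Q : Matrix (Fin n) (Fin n) ℝ) (hQ : Q.IsSymm) :
    ∃ x ∈ stdSimplex ℝ (Fin n), x ⬝ᵥ Q.mulVec x = nu n Q ∧
      ∀ i j : Fin n, i ≠ j → 0 < x i → 0 < x j → 0 < Q i i + Q j j - 2 * Q i j := by
  classical
  set f : (Fin n → ℝ) → ℝ := fun x => x ⬝ᵥ Q.mulVec x with hf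
  have hcont : Continuous f := by
    simp only [hf, dotProduct, Matrix.mulVec]
    fun_prop
  have hne : (stdSimplex ℝ (Fin n)).Nonempty :=
    ⟨_, single_mem_stdSimplex ℝ (⟨0, hn⟩ : Fin n)⟩
  obtain ⟨x₀, hx₀, hmin⟩ :=
    (isCompact_stdSimplex ℝ (Fin n)).exists_isMinOn hne hcont.continuousOn
  have hnu : f x₀ = nu n Q := by
    have : IsLeast (f '' stdSimplex ℝ (Fin n)) (f x₀) := by
      refine ⟨⟨x₀, hx₀, rfl⟩, ?_⟩
      rintro _ ⟨y, hy, rfl⟩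
      exact hmin hy
    exact this.csInf_eq.symm
  have hlow : ∀ y ∈ stdSimplex ℝ (Fin n), nu n Q ≤ f y := by
    intro y hy
    rw [← hnu]
    exact hmin hy
  have key : ∀ m : ℕ, ∀ x ∈ stdSimplex ℝ (Fin n), f x = nu n Q →
      (Finset.univ.filter (fun k => 0 < x k)).card = m →
      ∃ x ∈ stdSimplex ℝ (Fin n), x ⬝ᵥ Q.mulVec x = nu n Q ∧
      ∀ i j : Fin n, i ≠ j → 0 < x i → 0 < x j → 0 < Q i i + Q j j - 2 * Q i j := by
    intro m
    induction m using Nat.strong_induction_on with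
    | _ m ih =>
      intro x hx hxn hm
      by_cases h : ∀ i j : Fin n, i ≠ j → 0 < x i → 0 < x j →
          0 < Q i i + Q j j - 2 * Q i j
      · exact ⟨x, hx, hxn, h⟩
      push Not at h
      obtain ⟨i, j, hij, hi, hj, hc⟩ := h
      have hji : Q j i = Q i j := hQ.apply i j
      obtain ⟨y, hy, hle, hcard⟩ : ∃ y ∈ stdSimplex ℝ (Fin n),
          y ⬝ᵥ Q.mulVec y ≤ x ⬝ᵥ Q.mulVec x ∧
          (Finset.univ.filter (fun k => 0 < y k)).card
            < (Finset.univ.filter (fun k => 0 < x k)).card := by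
        rcases le_total (Q.mulVec x i) (Q.mulVec x j) with hb | hb
        · exact clique_step Q hQ x hx i j hij hi hj hc hb
        · exact clique_step Q hQ x hx j i hij.symm hj hi (by linarith) hb
      exact ih _ (hm ▸ hcard) y hy (le_antisymm (hle.trans hxn.le) (hlow y hy)) rfl
  exact key _ x₀ hx₀ hnu rfl
end

section
/- For every n ≥ 1 and symmetric matrix Q ∈ ℝ^{n×n}, there exists a global minimizer x* ∈ Δ_n of xᵀQx over Δ_n such that for every pair of indices i < j with Q_{ii} + Q_{jj} − 2Q_{ij} ≤ 0, at most one of x*_i and x*_j is strictly positive (i.e., x*_i = 0 or x*_j = 0). Consequently, the inequalities y_i + y_j ≤ 1 for such pairs (where y_k = 1 if x_k > 0 and y_k = 0 otherwise) are valid for the mixed integer linear programming formulations of the standard quadratic program. -/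
open Matrix

lemma stqp_step (n : ℕ) (Q : Matrix (Fin n) (Fin n) ℝ) (hQ : Q.IsSymm)
    (x : Fin n → ℝ) (hx : x ∈ stdSimplex ℝ (Fin n)) (i j : Fin n) (hij : i ≠ j)
    (hc : Q i i + Q j j - 2 * Q i j ≤ 0) (hi : x i ≠ 0) (hj : x j ≠ 0)
    (hb : Q.mulVec x i - Q.mulVec x j ≤ 0) :
    ∃ y ∈ stdSimplex ℝ (Fin n), y ⬝ᵥ Q.mulVec y ≤ x ⬝ᵥ Q.mulVec x ∧
      (Finset.univ.filter fun k => y k ≠ 0).card < (Finset.univ.filter fun k => x k ≠ 0).card := by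
  obtain ⟨hx0, hx1⟩ := hx
  set d : Fin n → ℝ := Pi.single i 1 - Pi.single j 1 with hd
  have hyi : (x + x j • d) i = x i + x j := by simp [hd, hij]
  have hyj : (x + x j • d) j = 0 := by simp [hd, hij.symm]
  have hyk : ∀ k, k ≠ i → k ≠ j → (x + x j • d) k = x k := by
    intro k h1 h2
    simp [hd, h1, h2]
  refine ⟨x + x j • d, ⟨?_, ?_⟩, ?_, ?_⟩
  · intro k
    by_cases h1 : k = i
    · subst h1; rw [hyi]; exact add_nonneg (hx0 _) (hx0 _)
    by_cases h2 : k = j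
    · subst h2; rw [hyj]
    rw [hyk k h1 h2]; exact hx0 k
  · simp [hd, Finset.sum_add_distrib, ← Finset.mul_sum, hx1]
  · have hsym : x ⬝ᵥ Q.mulVec d = d ⬝ᵥ Q.mulVec x := by
      rw [Matrix.dotProduct_mulVec, ← Matrix.mulVec_transpose, hQ.eq, dotProduct_comm]
    have h1 : d ⬝ᵥ Q.mulVec x = Q.mulVec x i - Q.mulVec x j := by
      simp [hd, sub_dotProduct]
    have h2 : d ⬝ᵥ Q.mulVec d = Q i i + Q j j - 2 * Q i j := by
      have := hQ.apply i j
      simp [hd, sub_dotProduct, Matrix.mulVec_sub]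
      linarith
    have h3 : (x + x j • d) ⬝ᵥ Q.mulVec (x + x j • d) =
        x ⬝ᵥ Q.mulVec x + 2 * x j * (d ⬝ᵥ Q.mulVec x) + x j ^ 2 * (d ⬝ᵥ Q.mulVec d) := by
      simp only [Matrix.mulVec_add, Matrix.mulVec_smul, add_dotProduct, dotProduct_add,
        smul_dotProduct, dotProduct_smul, smul_eq_mul, hsym]
      ring
    rw [h3, h1, h2]
    have h4 := mul_nonpos_of_nonneg_of_nonpos (hx0 j) hb
    have h5 := mul_nonpos_of_nonneg_of_nonpos (sq_nonneg (x j)) hc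
    linarith
  · apply Finset.card_lt_card
    rw [Finset.ssubset_iff_of_subset]
    · exact ⟨j, by simpa using hj, by simpa using hyj⟩
    · intro k hk
      rw [Finset.mem_filter] at hk ⊢
      refine ⟨hk.1, ?_⟩
      by_cases h1 : k = i
      · rwa [h1]
      by_cases h2 : k = j
      · rwa [h2]
      rw [← hyk k h1 h2]; exact hk.2

/-- There exists a global minimizer x* of (StQP) such that for every pair i < j
with Q_ii + Q_jj − 2 Q_ij ≤ 0, at most one of x*_i and x*_j is positive. -/
theorem exists_minimizer_valid_inequalities (n : ℕ) (hn : 1 ≤ n)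
    (Q : Matrix (Fin n) (Fin n) ℝ) (hQ : Q.IsSymm) :
    ∃ x ∈ stdSimplex ℝ (Fin n), x ⬝ᵥ Q.mulVec x = nu n Q ∧
      ∀ i j : Fin n, i < j → Q i i + Q j j - 2 * Q i j ≤ 0 → x i = 0 ∨ x j = 0 := by
  classical
  let f : (Fin n → ℝ) → ℝ := fun x => x ⬝ᵥ Q.mulVec x
  have hf : Continuous f := by
    simp only [f, dotProduct, Matrix.mulVec]; fun_prop
  have hne : (stdSimplex ℝ (Fin n)).Nonempty := ⟨_, single_mem_stdSimplex ℝ (⟨0, hn⟩ : Fin n)⟩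
  have hcpt : IsCompact (stdSimplex ℝ (Fin n)) := isCompact_stdSimplex ℝ (Fin n)
  obtain ⟨x₀, hx₀, hx₀e⟩ := hcpt.exists_sInf_image_eq hne hf.continuousOn
  have hle : ∀ y ∈ stdSimplex ℝ (Fin n), nu n Q ≤ y ⬝ᵥ Q.mulVec y := fun y hy =>
    csInf_le (hcpt.image hf).bddBelow ⟨y, hy, rfl⟩
  let P : ℕ → Prop := fun m => ∃ x ∈ stdSimplex ℝ (Fin n), x ⬝ᵥ Q.mulVec x = nu n Q ∧
    (Finset.univ.filter fun k => x k ≠ 0).card = m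
  have hP : ∃ m, P m := ⟨_, x₀, hx₀, hx₀e.symm, rfl⟩
  obtain ⟨x, hx, hxe, hxm⟩ := Nat.find_spec hP
  refine ⟨x, hx, hxe, ?_⟩
  have key : ∀ i j : Fin n, i ≠ j → Q i i + Q j j - 2 * Q i j ≤ 0 → x i ≠ 0 → x j ≠ 0 →
      Q.mulVec x i - Q.mulVec x j ≤ 0 → False := by
    intro i j hij hc hi hj hb
    obtain ⟨y, hy, hyle, hlt⟩ := stqp_step n Q hQ x hx i j hij hc hi hj hb
    rw [hxm] at hlt
    exact Nat.find_min hP hlt ⟨y, hy, le_antisymm (hyle.trans hxe.le) (hle y hy), rfl⟩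
  intro i j hij hc
  by_contra! h
  rcases le_total (Q.mulVec x i - Q.mulVec x j) 0 with hb | hb
  · exact key i j hij.ne hc h.1 h.2 hb
  · refine key j i hij.ne' ?_ h.2 h.1 (by linarith)
    have := hQ.apply i j
    linarith
end
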